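/- arXiv:2301.05153 — 2 statements merged into one kernel-verified Lean document; each statement's English description precedes it below -/
import Mathlib

section
/- Suppose λ and μ are r-multipartitions of the same integer n. Then λ and μ have the same hub if and only if they have the same residue multiset, i.e., Res_a(λ) = Res_a(μ). -/
/-!
Combinatorial framework for multipartitions, residues, β-sets, abacus levels,
weights, hubs, core blocks and Scopes-type moves, following Fayers and the paper.
Rows and columns of Young diagrams are indexed from 0, so the node in row `b`
and column `c` (0-based) of component `j` has residue `a j + c - b` mod `e`.
-/

open scoped Classical

namespace AK

/-- A partition, given by its (antitone, finitely supported) sequence of parts,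
rows indexed from `0`. -/
structure PartitionFun : Type where
  part : ℕ → ℕ
  antitone : Antitone part
  finite_support : ∃ N, ∀ b, N ≤ b → part b = 0

/-- The node in row `b`, column `c` (0-based) belongs to the Young diagram. -/
def PartitionFun.InDiag (lam : PartitionFun) (b c : ℕ) : Prop := c < lam.part b

/-- The node `(b,c)` is removable: deleting it leaves the diagram of a partition. -/
def PartitionFun.Removable (lam : PartitionFun) (b c : ℕ) : Prop :=
  lam.part b = c + 1 ∧ lam.part (b + 1) ≤ c

/-- The node `(b,c)` is addable: adjoining it gives the diagram of a partition. -/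
def PartitionFun.Addable (lam : PartitionFun) (b c : ℕ) : Prop :=
  lam.part b = c ∧ (b = 0 ∨ lam.part b < lam.part (b - 1))

/-- An `r`-multipartition. -/
abbrev Multipartition (r : ℕ) := Fin r → PartitionFun

/-- Nodes: `(b, c, j)` with row `b`, column `c`, component `j`. -/
abbrev Node (r : ℕ) := ℕ × ℕ × Fin r

/-- The Young diagram of a multipartition, as a set of nodes. -/
def diag {r : ℕ} (lam : Multipartition r) : Set (Node r) :=
  {x | (lam x.2.2).InDiag x.1 x.2.1}

/-- The size `n` of a multipartition of `n`. -/
noncomputable def msize {r : ℕ} (lam : Multipartition r) : ℕ :=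
  Set.ncard (diag lam)

/-- `c_i(λ)`: the number of nodes of residue `i` (mod `e`). -/
noncomputable def nodeCount {r : ℕ} (e : ℕ) (a : Fin r → ℤ) (lam : Multipartition r)
    (i : ℤ) : ℕ :=
  Set.ncard {x : Node r | (lam x.2.2).InDiag x.1 x.2.1 ∧
    (a x.2.2 + (x.2.1 : ℤ) - (x.1 : ℤ)) % (e : ℤ) = i % e}

/-- Number of removable nodes of residue `i` in component `j`. -/
noncomputable def removableCount {r : ℕ} (e : ℕ) (a : Fin r → ℤ) (lam : Multipartition r)
    (i : ℤ) (j : Fin r) : ℕ :=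
  Set.ncard {p : ℕ × ℕ | (lam j).Removable p.1 p.2 ∧
    (a j + (p.2 : ℤ) - (p.1 : ℤ)) % (e : ℤ) = i % e}

/-- Number of addable nodes of residue `i` in component `j`. -/
noncomputable def addableCount {r : ℕ} (e : ℕ) (a : Fin r → ℤ) (lam : Multipartition r)
    (i : ℤ) (j : Fin r) : ℕ :=
  Set.ncard {p : ℕ × ℕ | (lam j).Addable p.1 p.2 ∧
    (a j + (p.2 : ℤ) - (p.1 : ℤ)) % (e : ℤ) = i % e}

/-- `δ^j_i(λ)` = (removable `i`-nodes of component `j`) − (addable `i`-nodes of component `j`). -/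
noncomputable def delta {r : ℕ} (e : ℕ) (a : Fin r → ℤ) (lam : Multipartition r)
    (i : ℤ) (j : Fin r) : ℤ :=
  (removableCount e a lam i j : ℤ) - (addableCount e a lam i j : ℤ)

/-- The hub `δ_i(λ) = Σ_j δ^j_i(λ)`. -/
noncomputable def hub {r : ℕ} (e : ℕ) (a : Fin r → ℤ) (lam : Multipartition r) (i : ℤ) : ℤ :=
  ∑ j : Fin r, delta e a lam i j

/-- Two multipartitions have the same hub. -/
def SameHub {r : ℕ} (e : ℕ) (a : Fin r → ℤ) (lam mu : Multipartition r) : Prop :=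
  ∀ i : ℤ, hub e a lam i = hub e a mu i

/-- `d_i(m) = min { δ^j_i(m) : 1 ≤ j ≤ r }`. -/
noncomputable def dmin {r : ℕ} (e : ℕ) (a : Fin r → ℤ) (lam : Multipartition r) (i : ℤ) : ℤ :=
  sInf {x : ℤ | ∃ j : Fin r, delta e a lam i j = x}

/-- The weight `w(λ) = Σ_j c_{a_j}(λ) − (1/2) Σ_{i∈ℤ/eℤ} (c_i(λ) − c_{i+1}(λ))²`. -/
noncomputable def weight {r : ℕ} (e : ℕ) (a : Fin r → ℤ) (lam : Multipartition r) : ℚ :=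
  (∑ j : Fin r, (nodeCount e a lam (a j) : ℚ)) -
    (1 / 2 : ℚ) * ∑ i ∈ Finset.range e,
      ((nodeCount e a lam (i : ℤ) : ℚ) - (nodeCount e a lam ((i : ℤ) + 1) : ℚ)) ^ 2

/-- The β-set `B^j = {λ_b + a_j − b : b ≥ 1}` (here with rows indexed from 0). -/
def betaSet (aj : ℤ) (lam : PartitionFun) : Set ℤ :=
  {x | ∃ b : ℕ, x = (lam.part b : ℤ) + aj - ((b : ℤ) + 1)}

/-- A partition is an `e`-core: `β ∈ B` implies `β − e ∈ B`. -/
def IsECore (e : ℕ) (aj : ℤ) (lam : PartitionFun) : Prop :=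
  ∀ x ∈ betaSet aj lam, x - (e : ℤ) ∈ betaSet aj lam

/-- A multicore: all components are `e`-cores. -/
def IsMulticore {r : ℕ} (e : ℕ) (a : Fin r → ℤ) (lam : Multipartition r) : Prop :=
  ∀ j, IsECore e (a j) (lam j)

/-- `ℓ^a_{ij}(λ)`: the level of the lowest bead on runner `i`, i.e. the largest `x`
with `x·e + i` in the β-set. -/
noncomputable def level (e : ℕ) (aj : ℤ) (lam : PartitionFun) (i : ℕ) : ℤ :=
  sSup {x : ℤ | x * (e : ℤ) + (i : ℤ) ∈ betaSet aj lam}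

/-- `γ^{jk}_i(λ) = ℓ^a_{ij}(λ) − ℓ^a_{ik}(λ)`. -/
noncomputable def gamma {r : ℕ} (e : ℕ) (a : Fin r → ℤ) (lam : Multipartition r)
    (i : ℕ) (j k : Fin r) : ℤ :=
  level e (a j) (lam j) i - level e (a k) (lam k) i

/-- `γ^{jk}_{il}(λ) = γ^{jk}_i(λ) − γ^{jk}_l(λ)`. -/
noncomputable def gammaD {r : ℕ} (e : ℕ) (a : Fin r → ℤ) (lam : Multipartition r)
    (i l : ℕ) (j k : Fin r) : ℤ :=
  gamma e a lam i j k - gamma e a lam l j k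

/-- Move a bead from runner `i` to runner `l` in the β-set `S`: replace the largest
element of `S` congruent to `i` mod `e` by the smallest integer congruent to `l`
mod `e` not in `S`. -/
noncomputable def moveBead (e : ℕ) (i l : ℕ) (S : Set ℤ) : Set ℤ :=
  insert (sInf {x : ℤ | x % (e : ℤ) = (l : ℤ) % e ∧ x ∉ S})
    (S \ {sSup {x : ℤ | x % (e : ℤ) = (i : ℤ) % e ∧ x ∈ S}})

/-- The effect of `s^{jk}_{il}` on the tuple of β-sets: move a bead from runner `i`
to runner `l` in component `j`, and from runner `l` to runner `i` in component `k`. -/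
noncomputable def swapSets {r : ℕ} (e i l : ℕ) (j k : Fin r) (S : Fin r → Set ℤ) :
    Fin r → Set ℤ :=
  Function.update (Function.update S j (moveBead e i l (S j))) k
    (moveBead e l i (Function.update S j (moveBead e i l (S j)) k))

/-- `m' = s^{jk}_{il}(m)`, expressed via β-sets. -/
def IsSwap {r : ℕ} (e : ℕ) (a : Fin r → ℤ) (i l : ℕ) (j k : Fin r)
    (m m' : Multipartition r) : Prop :=
  ∀ j', betaSet (a j') (m' j') = swapSets e i l j k (fun t => betaSet (a t) (m t)) j'

/-- `λ` lies in a core block: its weight is minimal among the weights of all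
multipartitions with the same hub. -/
def MinimalWeight {r : ℕ} (e : ℕ) (a : Fin r → ℤ) (lam : Multipartition r) : Prop :=
  ∀ mu : Multipartition r, SameHub e a lam mu → weight e a lam ≤ weight e a mu

/-- `(b_0,…,b_{e−1})` is a base tuple for `mu` with respect to the multicharge `a'`
(congruent to `a` componentwise mod `e`): each `ℓ^{a'}_{ij}(mu)` is `b i` or `b i + 1`. -/
def IsBaseTuple {r : ℕ} (e : ℕ) (a : Fin r → ℤ) (mu : Multipartition r)
    (a' : Fin r → ℤ) (b : ℕ → ℤ) : Prop :=
  (∀ j, (e : ℤ) ∣ (a' j - a j)) ∧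
    ∀ i < e, ∀ j, level e (a' j) (mu j) i = b i ∨ level e (a' j) (mu j) i = b i + 1

/-- `K_i(C)` for the core block of `mu`: among all base tuples (over all admissible
multicharges), take `b i` maximal and then `b (i−1)` minimal, and set
`K_i = b_i − b_{i−1} − 1` for `i ≠ 0`, `K_0 = b_0 − b_{e−1} − 2`. -/
noncomputable def Kconst {r : ℕ} (e : ℕ) (a : Fin r → ℤ) (mu : Multipartition r)
    (i : ℕ) : ℤ :=
  let Bi : ℤ := sSup {x : ℤ | ∃ a' bt, IsBaseTuple e a mu a' bt ∧ bt i = x}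
  let iprev : ℕ := if i = 0 then e - 1 else i - 1
  let Bp : ℤ := sInf {x : ℤ | ∃ a' bt, IsBaseTuple e a mu a' bt ∧ bt i = Bi ∧ bt iprev = x}
  Bi - Bp - (if i = 0 then 2 else 1)

/-- The map `φ_i : ℤ → ℤ`. -/
def phiMap (e i : ℕ) (x : ℤ) : ℤ :=
  if x % (e : ℤ) = ((i : ℤ) - 1) % e then x + 1
  else if x % (e : ℤ) = (i : ℤ) % e then x - 1
  else x

/-- Lexicographic order on multipartitions: `λ > μ`. -/
def lexGT {r : ℕ} (lam mu : Multipartition r) : Prop :=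
  ∃ j : Fin r, (∀ j' < j, (lam j').part = (mu j').part) ∧
    ∃ i : ℕ, (∀ i' < i, (lam j).part i' = (mu j).part i') ∧
      (mu j).part i < (lam j).part i

/-- `x` is above `y`: `j < j'` or (`j = j'` and `b < b'`). -/
def NodeAbove {r : ℕ} (x y : Node r) : Prop :=
  x.2.2 < y.2.2 ∨ (x.2.2 = y.2.2 ∧ x.1 < y.1)

/-- The order on nodes: `x < y` iff `y` is above `x`. -/
def NodeLT {r : ℕ} (x y : Node r) : Prop := NodeAbove y x

/-- `N_A(λ)` = (addable `i`-nodes of `λ` below `A`) − (removable `i`-nodes of `λ` below `A`). -/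
noncomputable def Nfac {r : ℕ} (e : ℕ) (a : Fin r → ℤ) (lam : Multipartition r)
    (i : ℤ) (A : Node r) : ℤ :=
  (Set.ncard {y : Node r | (lam y.2.2).Addable y.1 y.2.1 ∧
      (a y.2.2 + (y.2.1 : ℤ) - (y.1 : ℤ)) % (e : ℤ) = i % e ∧ NodeAbove A y} : ℤ) -
  (Set.ncard {y : Node r | (lam y.2.2).Removable y.1 y.2.1 ∧
      (a y.2.2 + (y.2.1 : ℤ) - (y.1 : ℤ)) % (e : ℤ) = i % e ∧ NodeAbove A y} : ℤ)

/-- `lam` is obtained from `mu` by adding one `e`-rim hook to some component: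
on β-sets, some `β ∈ B^j` with `β + e ∉ B^j` is replaced by `β + e`. -/
def AddRimHook {r : ℕ} (e : ℕ) (a : Fin r → ℤ) (mu lam : Multipartition r) : Prop :=
  ∃ (j : Fin r) (β : ℤ), β ∈ betaSet (a j) (mu j) ∧ β + (e : ℤ) ∉ betaSet (a j) (mu j) ∧
    betaSet (a j) (lam j) = insert (β + (e : ℤ)) (betaSet (a j) (mu j) \ {β}) ∧
    ∀ j' ≠ j, betaSet (a j') (lam j') = betaSet (a j') (mu j')

/-- The number of inversions (length) of a permutation of `Fin d`. -/
noncomputable def permLength (d : ℕ) (σ : Equiv.Perm (Fin d)) : ℕ :=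
  (Finset.univ.filter (fun p : Fin d × Fin d => p.1 < p.2 ∧ σ p.2 < σ p.1)).card

/-!
Writing `c_i` for the number of nodes of residue `i`, the hub is minus the Laplacian of `c`, up to a
term depending only on the multicharge:
`δ_i = 2 c_i - c_{i-1} - c_{i+1} - #{j | a_j ≡ i}`.
This holds row by row, since the second difference of a function of the content telescopes along
each row of the Young diagram. So equal residue multisets give equal hubs. Conversely, if the hubs
agree, the difference of the two residue counts is a bounded harmonic function on `ℤ`, hence a
constant, and the constant vanishes because the sizes agree.
-/

section HarmonicSequence

variable {A : Type*} [AddCommGroup A] {d : ℤ → A}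

theorem add_one_sub_self_eq_of_harmonic (hd : ∀ i, 2 • d i = d (i - 1) + d (i + 1)) (n : ℤ) :
    d (n + 1) - d n = d 1 - d 0 := by
  have hstep (i : ℤ) : d (i + 1) - d i = d (i - 1 + 1) - d (i - 1) := by
    rw [sub_add_cancel, sub_eq_sub_iff_add_eq_add, ← two_nsmul, hd, add_comm]
  induction n using Int.induction_on with
  | zero => rw [zero_add]
  | succ n ih => rw [hstep, add_sub_cancel_right, ih]
  | pred n ih => rw [← hstep, ih]

theorem eq_add_zsmul_of_harmonic (hd : ∀ i, 2 • d i = d (i - 1) + d (i + 1)) (n : ℤ) :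
    d n = d 0 + n • (d 1 - d 0) := by
  induction n using Int.induction_on with
  | zero => rw [zero_zsmul, add_zero]
  | succ n ih =>
    rw [← sub_add_cancel (d (n + 1)) (d n), add_one_sub_self_eq_of_harmonic hd, ih, add_zsmul,
      one_zsmul]
    abel
  | pred n ih =>
    have hslope := add_one_sub_self_eq_of_harmonic hd (-n - 1)
    rw [sub_add_cancel] at hslope
    rw [← sub_sub_cancel (d (-n)) (d (-n - 1)), hslope, ih, sub_zsmul, one_zsmul]
    abel

theorem apply_eq_apply_zero_of_harmonic_of_bounded [LinearOrder A] [IsOrderedAddMonoid A]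
    [Archimedean A] (hd : ∀ i, 2 • d i = d (i - 1) + d (i + 1)) {C : A} (hC : ∀ i, |d i| ≤ C)
    (n : ℤ) : d n = d 0 := by
  suffices hslope : d 1 - d 0 = 0 by
    rw [eq_add_zsmul_of_harmonic hd, hslope, zsmul_zero, add_zero]
  by_contra hne
  obtain ⟨m, hm⟩ := exists_lt_nsmul (abs_pos.mpr hne) (C + C)
  refine hm.not_ge ?_
  calc m • |d 1 - d 0| = |d m - d 0| := by
        rw [eq_add_zsmul_of_harmonic hd m, add_sub_cancel_left, natCast_zsmul, abs_nsmul]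
    _ ≤ |d m| + |d 0| := abs_sub _ _
    _ ≤ C + C := add_le_add (hC _) (hC _)

end HarmonicSequence

/-- The content `a + c - b` of the node in row `b` and column `c` of a component of charge `a`;
its class modulo `e` is the residue of the node. -/
def content (a : ℤ) (x : ℕ × ℕ) : ℤ := a + x.2 - x.1

namespace PartitionFun

variable (p : PartitionFun)

/-- The number of nonzero parts. -/
noncomputable def length : ℕ := Nat.find p.finite_support

/-- The Young diagram, as a finite set. -/
noncomputable def nodes : Finset (ℕ × ℕ) :=
  {x ∈ Finset.range p.length ×ˢ Finset.range (p.part 0) | p.InDiag x.1 x.2}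

/-- The finite set of removable nodes, listed by the rows they end. -/
noncomputable def removableNodes : Finset (ℕ × ℕ) :=
  {b ∈ Finset.range p.length | p.part (b + 1) < p.part b}.image fun b => (b, p.part b - 1)

/-- The finite set of addable nodes, listed by the rows they extend; the last of these is the row
below the last nonzero part, with index `length`. -/
noncomputable def addableNodes : Finset (ℕ × ℕ) :=
  {b ∈ Finset.range (p.length + 1) | b = 0 ∨ p.part b < p.part (b - 1)}.image fun b => (b, p.part b)

variable {p}

theorem part_eq_zero_of_length_le {b : ℕ} (hb : p.length ≤ b) : p.part b = 0 :=
  Nat.find_spec p.finite_support b hb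

theorem lt_length_of_part_pos {b : ℕ} (hb : 0 < p.part b) : b < p.length :=
  lt_of_not_ge fun hle => hb.ne' (part_eq_zero_of_length_le hle)

theorem mem_nodes {x : ℕ × ℕ} : x ∈ p.nodes ↔ p.InDiag x.1 x.2 := by
  rw [nodes, Finset.mem_filter, Finset.mem_product, Finset.mem_range, Finset.mem_range,
    and_iff_right_iff_imp]
  exact fun hx => ⟨lt_length_of_part_pos (Nat.zero_lt_of_lt hx),
    hx.trans_le (p.antitone (Nat.zero_le _))⟩

theorem mem_removableNodes {x : ℕ × ℕ} : x ∈ p.removableNodes ↔ p.Removable x.1 x.2 := by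
  obtain ⟨b, c⟩ := x
  simp only [removableNodes, Removable, Finset.mem_image, Finset.mem_filter, Finset.mem_range,
    Prod.mk.injEq]
  constructor
  · rintro ⟨b, ⟨-, hlt⟩, rfl, rfl⟩
    omega
  · rintro ⟨hb, hle⟩
    exact ⟨b, ⟨lt_length_of_part_pos (by omega), by omega⟩, rfl, by omega⟩

theorem mem_addableNodes {x : ℕ × ℕ} : x ∈ p.addableNodes ↔ p.Addable x.1 x.2 := by
  obtain ⟨b, c⟩ := x
  simp only [addableNodes, Addable, Finset.mem_image, Finset.mem_filter, Finset.mem_range,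
    Prod.mk.injEq]
  constructor
  · rintro ⟨b, ⟨-, hb⟩, rfl, rfl⟩
    exact ⟨rfl, hb⟩
  · rintro ⟨rfl, hb⟩
    refine ⟨b, ⟨?_, hb⟩, rfl, rfl⟩
    rcases hb with rfl | hlt
    · omega
    · have := lt_length_of_part_pos (Nat.zero_lt_of_lt hlt)
      omega

section Sums

variable {A : Type*} [AddCommMonoid A]

theorem sum_nodes (g : ℕ × ℕ → A) :
    ∑ x ∈ p.nodes, g x = ∑ b ∈ Finset.range p.length, ∑ c ∈ Finset.range (p.part b), g (b, c) := by
  refine Finset.sum_finset_product _ _ _ fun x => ?_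
  simp only [mem_nodes, InDiag, Finset.mem_range, iff_and_self]
  exact fun hx => lt_length_of_part_pos (Nat.zero_lt_of_lt hx)

variable (p) (a : ℤ) (f : ℤ → A)

theorem sum_removableNodes :
    ∑ x ∈ p.removableNodes, f (content a x) =
      ∑ b ∈ Finset.range p.length,
        if p.part (b + 1) < p.part b then f (content a (b, p.part b) - 1) else 0 := by
  rw [removableNodes, Finset.sum_image fun _ _ _ _ h => congrArg Prod.fst h, Finset.sum_filter]
  refine Finset.sum_congr rfl fun b _ => if_ctx_congr Iff.rfl (fun hlt => ?_) fun _ => rfl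
  simp only [content]
  congr 1
  omega

theorem sum_addableNodes :
    ∑ x ∈ p.addableNodes, f (content a x) =
      (∑ b ∈ Finset.range p.length,
        if p.part (b + 1) < p.part b then f (content a (b + 1, p.part (b + 1))) else 0) +
      f (content a (0, p.part 0)) := by
  rw [addableNodes, Finset.sum_image fun _ _ _ _ h => congrArg Prod.fst h, Finset.sum_filter,
    Finset.sum_range_succ']
  simp only [Nat.add_eq_zero_iff, one_ne_zero, and_false, false_or, Nat.add_sub_cancel, true_or,
    if_true]

end Sums

section Differences

variable {A : Type*} [AddCommGroup A] (p) (a : ℤ) (f : ℤ → A)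

-- When rows `b` and `b + 1` have equal length, row `b` ends at a node with the same content as the
-- first position past the end of row `b + 1`, so the terms of these two may be added to the sums
-- over removable and addable nodes without changing the difference.
theorem sum_removableNodes_sub_sum_addableNodes_eq_sum_rows :
    ∑ x ∈ p.removableNodes, f (content a x) - ∑ x ∈ p.addableNodes, f (content a x) =
      ∑ b ∈ Finset.range p.length,
        (f (content a (b, p.part b) - 1) - f (content a (b, p.part b))) - f (a - p.length) := by
  have hrow (b : ℕ) :
      ((if p.part (b + 1) < p.part b then f (content a (b, p.part b) - 1) else 0) -
        if p.part (b + 1) < p.part b then f (content a (b + 1, p.part (b + 1))) else 0) =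
      f (content a (b, p.part b) - 1) - f (content a (b + 1, p.part (b + 1))) := by
    split_ifs with hlt
    · rfl
    · have heq : p.part (b + 1) = p.part b :=
        (p.antitone (Nat.le_succ b)).antisymm (not_lt.mp hlt)
      have hcontent : content a (b + 1, p.part (b + 1)) = content a (b, p.part b) - 1 := by
        simp only [content, heq]
        push_cast
        ring
      rw [hcontent, sub_self, sub_self]
  have hlast : content a (p.length, p.part p.length) = a - p.length := by
    simp [content, part_eq_zero_of_length_le le_rfl]
  have hshift := (Finset.sum_range_succ' (fun b => f (content a (b, p.part b))) p.length).symm.trans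
    (Finset.sum_range_succ _ _)
  rw [sum_removableNodes, sum_addableNodes, ← sub_sub, ← Finset.sum_sub_distrib,
    Finset.sum_congr rfl fun b _ => hrow b, Finset.sum_sub_distrib, Finset.sum_sub_distrib, sub_sub,
    hshift, hlast, sub_sub]

theorem sum_row_second_difference (b m : ℕ) :
    ∑ c ∈ Finset.range m,
      (2 • f (content a (b, c)) - f (content a (b, c) - 1) - f (content a (b, c) + 1)) =
    f (content a (b, m) - 1) - f (content a (b, m)) - (f (a - (b + 1 : ℕ)) - f (a - b)) := by
  have htelescope := Finset.sum_range_sub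
    (fun c : ℕ => f (content a (b, c) - 1) - f (content a (b, c))) m
  have hstart : content a (b, 0) = a - b := by simp [content]
  have hstart' : content a (b, 0) - 1 = a - (b + 1 : ℕ) := by rw [hstart]; push_cast; ring
  rw [hstart', hstart] at htelescope
  rw [← htelescope]
  refine Finset.sum_congr rfl fun c _ => ?_
  have hsucc : content a (b, c + 1) = content a (b, c) + 1 := by
    simp only [content]
    push_cast
    ring
  rw [hsucc, add_sub_cancel_right, two_nsmul]
  abel

theorem sum_removableNodes_sub_sum_addableNodes :
    ∑ x ∈ p.removableNodes, f (content a x) - ∑ x ∈ p.addableNodes, f (content a x) =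
      ∑ x ∈ p.nodes, (2 • f (content a x) - f (content a x - 1) - f (content a x + 1)) - f a := by
  have hcolumn := Finset.sum_range_sub (fun b : ℕ => f (a - b)) p.length
  rw [Nat.cast_zero, sub_zero] at hcolumn
  rw [sum_removableNodes_sub_sum_addableNodes_eq_sum_rows, sum_nodes,
    Finset.sum_congr rfl fun b _ => sum_row_second_difference a f b (p.part b),
    Finset.sum_sub_distrib _ fun b : ℕ => f (a - (b + 1 : ℕ)) - f (a - b), hcolumn]
  abel

end Differences

end PartitionFun

/-- The indicator function of the residue class of `i` modulo `e`. -/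
noncomputable def residueIndicator (e : ℕ) (i x : ℤ) : ℤ := if x % e = i % e then 1 else 0

theorem residueIndicator_add_right (e : ℕ) (i x k : ℤ) :
    residueIndicator e i (x + k) = residueIndicator e (i - k) x := by
  have hiff : x + k ≡ i [ZMOD e] ↔ x ≡ i - k [ZMOD e] :=
    ⟨fun h => by simpa using h.sub_right k, fun h => by simpa using h.add_right k⟩
  exact if_congr hiff rfl rfl

theorem residueIndicator_sub_right (e : ℕ) (i x k : ℤ) :
    residueIndicator e i (x - k) = residueIndicator e (i + k) x := by
  rw [sub_eq_add_neg, residueIndicator_add_right, sub_neg_eq_add]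

section Multipartitions

variable {r : ℕ} (e : ℕ) (a : Fin r → ℤ) (lam mu : Multipartition r)

/-- The Young diagram of a multipartition, as a finite set. -/
noncomputable def diagFinset : Finset (Node r) :=
  (Finset.univ.sigma fun j => (lam j).nodes).image fun x => (x.2.1, x.2.2, x.1)

/-- The residue of a node, as the representative `x % e`; for `e = 0` this is the integer `x`
itself, which is the usual convention for infinite quantum characteristic. -/
def residue (x : Node r) : ℤ := content (a x.2.2) (x.1, x.2.1) % e

variable {lam} in
theorem mem_diagFinset {x : Node r} : x ∈ diagFinset lam ↔ (lam x.2.2).InDiag x.1 x.2.1 := by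
  obtain ⟨b, c, j⟩ := x
  simp only [diagFinset, Finset.mem_image, Finset.mem_sigma, Finset.mem_univ, true_and,
    PartitionFun.mem_nodes, Prod.mk.injEq]
  constructor
  · rintro ⟨⟨j, b, c⟩, hx, rfl, rfl, rfl⟩
    exact hx
  · exact fun hx => ⟨⟨j, b, c⟩, hx, rfl, rfl, rfl⟩

theorem sum_diagFinset {A : Type*} [AddCommMonoid A] (g : Node r → A) :
    ∑ x ∈ diagFinset lam, g x = ∑ j, ∑ y ∈ (lam j).nodes, g (y.1, y.2, j) := by
  rw [diagFinset, Finset.sum_image, Finset.sum_sigma]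
  rintro ⟨j, b, c⟩ - ⟨j', b', c'⟩ - h
  simp only [Prod.mk.injEq] at h
  obtain ⟨rfl, rfl, rfl⟩ := h
  rfl

theorem msize_eq_card_diagFinset : msize lam = (diagFinset lam).card := by
  rw [msize, ← Set.ncard_coe_finset]
  congr 1
  ext x
  exact mem_diagFinset.symm

theorem nodeCount_eq_card_filter (i : ℤ) :
    nodeCount e a lam i = {x ∈ diagFinset lam | residue e a x = i % e}.card := by
  rw [nodeCount, ← Set.ncard_coe_finset]
  congr 1
  ext x
  simp only [Finset.coe_filter, mem_diagFinset]
  rfl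

theorem nodeCount_le_msize (i : ℤ) : nodeCount e a lam i ≤ msize lam := by
  rw [nodeCount_eq_card_filter, msize_eq_card_diagFinset]
  exact Finset.card_filter_le _ _

variable {e a lam} in
theorem sum_nodeCount_eq_msize {S : Finset ℤ} (hS : ∀ i ∈ S, i % e = i)
    (hlam : ∀ x ∈ diagFinset lam, residue e a x ∈ S) :
    ∑ i ∈ S, nodeCount e a lam i = msize lam := by
  rw [msize_eq_card_diagFinset, Finset.card_eq_sum_card_fiberwise hlam]
  refine Finset.sum_congr rfl fun i hi => ?_
  rw [nodeCount_eq_card_filter, hS i hi]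

theorem exists_nonempty_sum_nodeCount_eq_msize :
    ∃ S : Finset ℤ, S.Nonempty ∧ ∑ i ∈ S, nodeCount e a lam i = msize lam ∧
      ∑ i ∈ S, nodeCount e a mu i = msize mu := by
  let S : Finset ℤ := insert 0 ((diagFinset lam ∪ diagFinset mu).image (residue e a))
  have hS : ∀ i ∈ S, i % e = i := by
    simp only [S, Finset.forall_mem_insert, Finset.forall_mem_image, Int.zero_emod, true_and]
    exact fun _ _ => Int.emod_emod _ _
  have hmem : ∀ x ∈ diagFinset lam ∪ diagFinset mu, residue e a x ∈ S := fun x hx =>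
    Finset.mem_insert_of_mem (Finset.mem_image_of_mem _ hx)
  exact ⟨S, Finset.insert_nonempty _ _,
    sum_nodeCount_eq_msize hS fun x hx => hmem x (Finset.mem_union_left _ hx),
    sum_nodeCount_eq_msize hS fun x hx => hmem x (Finset.mem_union_right _ hx)⟩

theorem nodeCount_eq_sum_residueIndicator (i : ℤ) :
    (nodeCount e a lam i : ℤ) =
      ∑ j, ∑ x ∈ (lam j).nodes, residueIndicator e i (content (a j) x) := by
  rw [nodeCount_eq_card_filter, Finset.natCast_card_filter, sum_diagFinset]
  rfl

theorem removableCount_eq_sum_residueIndicator (i : ℤ) (j : Fin r) :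
    (removableCount e a lam i j : ℤ) =
      ∑ x ∈ (lam j).removableNodes, residueIndicator e i (content (a j) x) := by
  simp only [residueIndicator, ← Finset.natCast_card_filter, ← Set.ncard_coe_finset,
    Finset.coe_filter, PartitionFun.mem_removableNodes]
  rfl

theorem addableCount_eq_sum_residueIndicator (i : ℤ) (j : Fin r) :
    (addableCount e a lam i j : ℤ) =
      ∑ x ∈ (lam j).addableNodes, residueIndicator e i (content (a j) x) := by
  simp only [residueIndicator, ← Finset.natCast_card_filter, ← Set.ncard_coe_finset,
    Finset.coe_filter, PartitionFun.mem_addableNodes]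
  rfl

theorem hub_eq_neg_laplacian_nodeCount (i : ℤ) :
    hub e a lam i = 2 * (nodeCount e a lam i : ℤ) - nodeCount e a lam (i + 1)
      - nodeCount e a lam (i - 1) - ∑ j, residueIndicator e i (a j) := by
  simp only [hub, delta, removableCount_eq_sum_residueIndicator,
    addableCount_eq_sum_residueIndicator, PartitionFun.sum_removableNodes_sub_sum_addableNodes,
    residueIndicator_add_right, residueIndicator_sub_right, nodeCount_eq_sum_residueIndicator,
    Finset.sum_sub_distrib, Finset.mul_sum, nsmul_eq_mul, Nat.cast_ofNat]

variable {e a lam mu}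

theorem nodeCount_sub_eq_of_sameHub (hsize : msize lam = msize mu) (hhub : SameHub e a lam mu)
    (i : ℤ) :
    (nodeCount e a lam i - nodeCount e a mu i : ℤ) = nodeCount e a lam 0 - nodeCount e a mu 0 := by
  refine apply_eq_apply_zero_of_harmonic_of_bounded (C := (msize lam : ℤ))
    (d := fun i => (nodeCount e a lam i - nodeCount e a mu i : ℤ)) (fun i => ?_) (fun i => ?_) i
  · have hi := hhub i
    rw [hub_eq_neg_laplacian_nodeCount, hub_eq_neg_laplacian_nodeCount] at hi
    rw [nsmul_eq_mul, Nat.cast_ofNat]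
    linarith
  · have hlam := nodeCount_le_msize e a lam i
    have hmu := nodeCount_le_msize e a mu i
    rw [abs_le]
    omega

theorem nodeCount_eq_of_sameHub (hsize : msize lam = msize mu) (hhub : SameHub e a lam mu) (i : ℤ) :
    nodeCount e a lam i = nodeCount e a mu i := by
  obtain ⟨S, hS, hlam, hmu⟩ := exists_nonempty_sum_nodeCount_eq_msize e a lam mu
  have hsum : ∑ i ∈ S, (nodeCount e a lam i - nodeCount e a mu i : ℤ) = 0 := by
    rw [Finset.sum_sub_distrib, ← Nat.cast_sum, ← Nat.cast_sum, hlam, hmu, hsize, sub_self]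
  rw [Finset.sum_congr rfl fun i _ => nodeCount_sub_eq_of_sameHub hsize hhub i, Finset.sum_const,
    smul_eq_zero_iff_right hS.card_ne_zero] at hsum
  have hi := nodeCount_sub_eq_of_sameHub hsize hhub i
  omega

theorem sameHub_of_nodeCount_eq (hcount : ∀ i, nodeCount e a lam i = nodeCount e a mu i) :
    SameHub e a lam mu := fun i => by
  simp only [hub_eq_neg_laplacian_nodeCount, hcount]

end Multipartitions

theorem stmt_16_general {r : ℕ} (e : ℕ) (a : Fin r → ℤ) (lam mu : Multipartition r)
    (hsize : msize lam = msize mu) :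
    SameHub e a lam mu ↔ ∀ i : ℤ, nodeCount e a lam i = nodeCount e a mu i :=
  ⟨nodeCount_eq_of_sameHub hsize, sameHub_of_nodeCount_eq⟩

/-- Proposition 3.2(2) with the block classification: two
multipartitions of the same `n` have the same hub iff they have the same residue
multiset, i.e. the same number of nodes of each residue. -/
theorem stmt_16 {e r : ℕ} (he : 2 ≤ e) (hr : 0 < r) (a : Fin r → ℤ)
    (lam mu : Multipartition r) (hsize : msize lam = msize mu) :
    SameHub e a lam mu ↔ ∀ i : ℤ, nodeCount e a lam i = nodeCount e a mu i :=
  stmt_16_general e a lam mu hsize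

end AK
end

section
/- Suppose λ is an r-multipartition and λ⁻ is the multipartition obtained from λ by removing an e-rim hook from some component λ^{(j)} (equivalently, on β-sets, by replacing some β ∈ B^j with β − e ∉ B^j by β − e). Then w(λ) = w(λ⁻) + r. -/
/-!
Combinatorial framework for multipartitions, residues, β-sets, abacus levels,
weights, hubs, core blocks and Scopes-type moves, following Fayers and the paper.
Rows and columns of Young diagrams are indexed from 0, so the node in row `b`
and column `c` (0-based) of component `j` has residue `a j + c - b` mod `e`.
-/

open scoped Classical

namespace AK

/-!
Read a row of the Young diagram as a run of consecutive contents ending at the β-number of that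
row. The number of its nodes of residue `i` is a difference of two values of `x ↦ ⌊(x - i) / e⌋`:
the value at the β-number minus a value that depends only on the row. Summing over rows, `c_i(λ)`
is, up to a constant, the sum of `⌊(x - i) / e⌋` over the β-numbers `x`, and replacing `β` by
`β + e` raises this sum by one. So adding an `e`-rim hook raises every `c_i` by one; in the weight,
the squared differences do not change and each of the `r` linear terms increases by one.
-/

open Finset

/-- The β-number `λ_b + a_j − (b + 1)` of row `b` (0-based), so that `betaSet aj lam` is the range
of `betaNumber aj lam`. -/
def betaNumber (aj : ℤ) (lam : PartitionFun) (b : ℕ) : ℤ :=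
  (lam.part b : ℤ) + aj - ((b : ℤ) + 1)

/-- The β-numbers of the first `N` rows: a finite truncation of the β-set over which one can sum. -/
def leadingBetaNumbers (aj : ℤ) (lam : PartitionFun) (N : ℕ) : Finset ℤ :=
  (range N).image (betaNumber aj lam)

/-- The nodes of residue `i` (mod `e`) of a single partition with charge `aj`. -/
def residueNodes (e : ℕ) (aj : ℤ) (lam : PartitionFun) (i : ℤ) : Set (ℕ × ℕ) :=
  {p | lam.InDiag p.1 p.2 ∧ (aj + (p.2 : ℤ) - (p.1 : ℤ)) % (e : ℤ) = i % e}

/-- The number of nodes of residue `i` of a single partition with charge `aj`: the contribution of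
one component to `nodeCount`. -/
noncomputable def residueCount (e : ℕ) (aj : ℤ) (lam : PartitionFun) (i : ℤ) : ℕ :=
  (residueNodes e aj lam i).ncard

/-- The columns in which row `b` of a partition with charge `aj` has a node of residue `i`. -/
def residueColumns (e : ℕ) (aj : ℤ) (lam : PartitionFun) (i : ℤ) (b : ℕ) : Finset ℕ :=
  (range (lam.part b)).filter fun c : ℕ => (aj + (c : ℤ) - (b : ℤ)) % (e : ℤ) = i % e

section Partition

variable {e N : ℕ} {aj β : ℤ} {lam mu : PartitionFun}

lemma betaNumber_strictAnti (aj : ℤ) (lam : PartitionFun) : StrictAnti (betaNumber aj lam) := by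
  intro b c hbc
  have := lam.antitone hbc.le
  unfold betaNumber
  omega

lemma betaSet_eq_range (aj : ℤ) (lam : PartitionFun) :
    betaSet aj lam = Set.range (betaNumber aj lam) := by
  ext x
  simp only [betaSet, betaNumber, Set.mem_ofPred_eq, Set.mem_range, eq_comm]

lemma betaSet_injective (aj : ℤ) : Function.Injective (betaSet aj) := by
  intro lam mu h
  have hrange : Set.range (OrderDual.toDual ∘ betaNumber aj lam) =
      Set.range (OrderDual.toDual ∘ betaNumber aj mu) := by
    rw [Set.range_comp, Set.range_comp, ← betaSet_eq_range, ← betaSet_eq_range, h]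
  have hbeta := ((betaNumber_strictAnti aj lam).dual_right.range_inj
    (betaNumber_strictAnti aj mu).dual_right).1 hrange
  have hpart : lam.part = mu.part := by
    funext b
    have hb : betaNumber aj lam b = betaNumber aj mu b := congrFun hbeta b
    unfold betaNumber at hb
    omega
  cases lam
  cases mu
  congr

lemma mem_leadingBetaNumbers (hN : ∀ b, N ≤ b → lam.part b = 0) {x : ℤ} :
    x ∈ leadingBetaNumbers aj lam N ↔ x ∈ betaSet aj lam ∧ aj - N ≤ x := by
  simp only [leadingBetaNumbers, betaSet_eq_range, mem_image, mem_range, Set.mem_range]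
  constructor
  · rintro ⟨b, hb, rfl⟩
    exact ⟨⟨b, rfl⟩, by unfold betaNumber; omega⟩
  · rintro ⟨⟨b, rfl⟩, hx⟩
    refine ⟨b, lt_of_not_ge fun hb => ?_, rfl⟩
    rw [betaNumber, hN b hb] at hx
    omega

lemma card_filter_range_emod_eq (he : 0 < e) (i y : ℤ) (p : ℕ) :
    (#((range p).filter fun c : ℕ => (y + (c : ℤ)) % (e : ℤ) = i % e) : ℤ) =
      (y + p - 1 - i) / e - (y - 1 - i) / e := by
  have hinj : Function.Injective fun c : ℕ => y + (c : ℤ) := fun c d h => by simpa using h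
  have himage : ((range p).filter fun c : ℕ => (y + (c : ℤ)) % (e : ℤ) = i % e).image
      (fun c : ℕ => y + (c : ℤ)) = {x ∈ Ioc (y - 1) (y + p - 1) | x ≡ i [ZMOD e]} := by
    ext x
    simp only [mem_image, mem_filter, mem_range, mem_Ioc]
    constructor
    · rintro ⟨c, ⟨hc, hmod⟩, rfl⟩
      exact ⟨by omega, hmod⟩
    · rintro ⟨hx, hmod⟩
      have hxy : y + ((x - y).toNat : ℤ) = x := by omega
      exact ⟨(x - y).toNat, ⟨by omega, by rwa [hxy]⟩, hxy⟩
  have hmono : (y - 1 - i) / (e : ℤ) ≤ (y + p - 1 - i) / e :=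
    Int.ediv_le_ediv (by omega) (by omega)
  rw [← card_image_of_injective _ hinj, himage, Int.Ioc_filter_modEq_card _ _ (by omega)]
  have hfloor (x : ℤ) : ⌊((x : ℚ) - i) / ((e : ℤ) : ℚ)⌋ = (x - i) / e := by
    exact_mod_cast Rat.floor_intCast_div_natCast (x - i) e
  rw [hfloor, hfloor]
  exact max_eq_left (sub_nonneg.2 hmono)

lemma card_residueColumns (he : 0 < e) (aj : ℤ) (lam : PartitionFun) (i : ℤ) (b : ℕ) :
    (#(residueColumns e aj lam i b) : ℤ) =
      (betaNumber aj lam b - i) / e - (aj - b - 1 - i) / e := by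
  simp only [residueColumns, betaNumber, add_sub_right_comm aj, card_filter_range_emod_eq he]
  ring_nf

lemma residueNodes_eq_coe_map_sigma (e : ℕ) (aj i : ℤ) (hN : ∀ b, N ≤ b → lam.part b = 0) :
    residueNodes e aj lam i =
      ((range N).sigma (residueColumns e aj lam i)).map
        (Equiv.sigmaEquivProd ℕ ℕ).toEmbedding := by
  ext ⟨b, c⟩
  have hrow : c < lam.part b → b < N := fun hc =>
    lt_of_not_ge fun hb => by simp [hN b hb] at hc
  simp only [residueNodes, residueColumns, PartitionFun.InDiag, Set.mem_ofPred_eq, mem_coe,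
    mem_map_equiv, Equiv.sigmaEquivProd_symm_apply, mem_sigma, mem_filter, mem_range]
  tauto

lemma finite_residueNodes (e : ℕ) (aj : ℤ) (lam : PartitionFun) (i : ℤ) :
    (residueNodes e aj lam i).Finite := by
  obtain ⟨N, hN⟩ := lam.finite_support
  rw [residueNodes_eq_coe_map_sigma e aj i hN]
  exact Finset.finite_toSet _

lemma residueCount_eq_sum_card_residueColumns (e : ℕ) (aj i : ℤ)
    (hN : ∀ b, N ≤ b → lam.part b = 0) :
    residueCount e aj lam i = ∑ b ∈ range N, #(residueColumns e aj lam i b) := by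
  rw [residueCount, residueNodes_eq_coe_map_sigma e aj i hN, Set.ncard_coe_finset, card_map,
    card_sigma]

lemma residueCount_eq_sum_leadingBetaNumbers (he : 0 < e) (aj i : ℤ)
    (hN : ∀ b, N ≤ b → lam.part b = 0) :
    (residueCount e aj lam i : ℤ) =
      ∑ x ∈ leadingBetaNumbers aj lam N, (x - i) / e -
        ∑ b ∈ range N, (aj - b - 1 - i) / (e : ℤ) := by
  rw [leadingBetaNumbers, sum_image (betaNumber_strictAnti aj lam).injective.injOn,
    ← sum_sub_distrib, residueCount_eq_sum_card_residueColumns e aj i hN, Nat.cast_sum]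
  exact sum_congr rfl fun b _ => card_residueColumns he aj lam i b

lemma sum_ediv_insert_erase {d : ℤ} (i : ℤ) {s : Finset ℤ} (hβ : β ∈ s) (hβd : β + d ∉ s) :
    ∑ x ∈ insert (β + d) (s.erase β), (x - i) / d = ∑ x ∈ s, (x - i) / d + 1 := by
  have hd : d ≠ 0 := by
    rintro rfl
    simp [hβ] at hβd
  have hshift : (β + d - i) / d = (β - i) / d + 1 := by
    rw [add_sub_right_comm, Int.add_ediv_of_dvd_right dvd_rfl, Int.ediv_self hd]
  rw [sum_insert fun h => hβd (mem_of_mem_erase h), ← add_sum_erase s _ hβ, hshift]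
  ring

lemma leadingBetaNumbers_eq_insert_erase (hlam : ∀ b, N ≤ b → lam.part b = 0)
    (hmu : ∀ b, N ≤ b → mu.part b = 0) (hNβ : aj - N ≤ β)
    (hbeta : betaSet aj lam = insert (β + e) (betaSet aj mu \ {β})) :
    leadingBetaNumbers aj lam N = insert (β + e) ((leadingBetaNumbers aj mu N).erase β) := by
  ext x
  have hbound : x = β + e → aj - N ≤ x := by omega
  simp only [mem_leadingBetaNumbers hlam, mem_leadingBetaNumbers hmu, hbeta, mem_insert, mem_erase,
    Set.mem_insert_iff, Set.mem_sdiff, Set.mem_singleton_iff]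
  tauto

lemma residueCount_eq_add_one (i : ℤ) (hβ : β ∈ betaSet aj mu)
    (hβe : β + e ∉ betaSet aj mu)
    (hbeta : betaSet aj lam = insert (β + e) (betaSet aj mu \ {β})) :
    residueCount e aj lam i = residueCount e aj mu i + 1 := by
  have he : 0 < e := by
    refine Nat.pos_of_ne_zero ?_
    rintro rfl
    simp [hβ] at hβe
  obtain ⟨L, hL⟩ := lam.finite_support
  obtain ⟨M, hM⟩ := mu.finite_support
  obtain ⟨N, hLN, hMN, hNβ⟩ : ∃ N : ℕ, L ≤ N ∧ M ≤ N ∧ aj - N ≤ β :=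
    ⟨L + M + (aj - β).toNat, by omega, by omega, by omega⟩
  have hlam : ∀ b, N ≤ b → lam.part b = 0 := fun b hb => hL b (hLN.trans hb)
  have hmu : ∀ b, N ≤ b → mu.part b = 0 := fun b hb => hM b (hMN.trans hb)
  have hmem : β ∈ leadingBetaNumbers aj mu N := (mem_leadingBetaNumbers hmu).2 ⟨hβ, hNβ⟩
  have hnotMem : β + e ∉ leadingBetaNumbers aj mu N :=
    fun h => hβe ((mem_leadingBetaNumbers hmu).1 h).1
  zify
  rw [residueCount_eq_sum_leadingBetaNumbers he aj i hlam,
    residueCount_eq_sum_leadingBetaNumbers he aj i hmu,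
    leadingBetaNumbers_eq_insert_erase hlam hmu hNβ hbeta, sum_ediv_insert_erase i hmem hnotMem]
  ring

end Partition

section Multipartition

variable {e r : ℕ} {a : Fin r → ℤ} {lam mu : Multipartition r}

lemma nodeCount_eq_sum_residueCount (e : ℕ) (a : Fin r → ℤ) (lam : Multipartition r) (i : ℤ) :
    nodeCount e a lam i = ∑ j, residueCount e (a j) (lam j) i := by
  have (j : Fin r) : Finite (residueNodes e (a j) (lam j) i) :=
    finite_residueNodes e (a j) (lam j) i
  let nodesEquiv : {x : Node r | (lam x.2.2).InDiag x.1 x.2.1 ∧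
      (a x.2.2 + (x.2.1 : ℤ) - (x.1 : ℤ)) % (e : ℤ) = i % e} ≃
      Σ j, residueNodes e (a j) (lam j) i :=
    { toFun x := ⟨x.1.2.2, (x.1.1, x.1.2.1), x.2⟩
      invFun y := ⟨(y.2.1.1, y.2.1.2, y.1), y.2.2⟩ }
  exact (Nat.card_congr nodesEquiv).trans Nat.card_sigma

lemma AddRimHook.nodeCount_eq_add_one (hrim : AddRimHook e a mu lam) (i : ℤ) :
    nodeCount e a lam i = nodeCount e a mu i + 1 := by
  obtain ⟨j, β, hβ, hβe, hbeta, hrest⟩ := hrim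
  have hunchanged : ∀ k ∈ univ.erase j,
      residueCount e (a k) (lam k) i = residueCount e (a k) (mu k) i := fun k hk => by
    rw [betaSet_injective (a k) (hrest k (ne_of_mem_erase hk))]
  rw [nodeCount_eq_sum_residueCount, nodeCount_eq_sum_residueCount,
    ← add_sum_erase _ _ (mem_univ j), sum_congr rfl hunchanged,
    residueCount_eq_add_one i hβ hβe hbeta, add_right_comm,
    add_sum_erase univ (fun k => residueCount e (a k) (mu k) i) (mem_univ j)]

lemma weight_eq_add_mul_of_nodeCount_eq_add {k : ℕ}
    (h : ∀ i, nodeCount e a lam i = nodeCount e a mu i + k) :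
    weight e a lam = weight e a mu + r * k := by
  simp only [weight, h, Nat.cast_add, add_sub_add_right_eq_sub, sum_add_distrib, sum_const,
    card_univ, Fintype.card_fin, nsmul_eq_mul]
  ring

end Multipartition

/-- Proposition 3.4: if `λ⁻` is obtained from `λ` by removing an
`e`-rim hook from some component, then `w(λ) = w(λ⁻) + r`. -/
theorem stmt_17 {e r : ℕ} (he : 2 ≤ e) (hr : 0 < r) (a : Fin r → ℤ)
    (lam lamMinus : Multipartition r)
    (hrim : AddRimHook e a lamMinus lam) :
    weight e a lam = weight e a lamMinus + (r : ℚ) := by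
  simpa using weight_eq_add_mul_of_nodeCount_eq_add hrim.nodeCount_eq_add_one

end AK
end
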